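/- Let F be a field of characteristic different from 2 and let u, ϖ ∈ F× be such that u, ϖ and uϖ are all non-squares in F×. Let E = F(√u) and K = E(√ϖ). Then the quadratic form q′ on K, viewed as a 4-dimensional F-vector space, defined by q′(k) = ½·tr_{E/F}(N_{K/E}(k)), is equivalent over F to the diagonal quadratic form ⟨1, u, −ϖ, −uϖ⟩; in particular, the determinant of the Gram matrix of q′ with respect to any F-basis of K is a square in F× (i.e., q′ has trivial discriminant). -/

import Mathlib

section helpers

theorem quad_indep {F E : Type*} [Field F] [Field E] [Algebra F E] (d : F)
    (hd : ¬ ∃ a : F, a ^ 2 = d) (s : E) (hs : s ^ 2 = algebraMap F E d) (a b : F)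
    (h : algebraMap F E a + algebraMap F E b * s = 0) : a = 0 ∧ b = 0 := by
  have hinj := (algebraMap F E).injective
  have hb : b = 0 := by
    by_contra hb
    apply hd
    refine ⟨a / b, ?_⟩
    have h1 : a ^ 2 = b ^ 2 * d := by
      apply hinj
      simp only [map_mul, map_pow, ← hs]
      linear_combination (algebraMap F E a - algebraMap F E b * s) * h
    rw [div_pow, h1]
    field_simp
  subst hb
  refine ⟨hinj ?_, rfl⟩
  simpa using h

theorem quad_basis {F E : Type*} [Field F] [Field E] [Algebra F E] (d : F)
    (hd : ¬ ∃ a : F, a ^ 2 = d) (s : E) (hs : s ^ 2 = algebraMap F E d)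
    (hgen : ∀ x : E, ∃ a b : F, x = algebraMap F E a + algebraMap F E b * s) :
    ∃ B : Module.Basis (Fin 2) F E, B 0 = 1 ∧ B 1 = s := by
  have hli : LinearIndependent F ![(1 : E), s] := by
    rw [LinearIndependent.pair_iff]
    intro a b h
    apply quad_indep d hd s hs a b
    simpa [Algebra.smul_def] using h
  suffices hsp : ⊤ ≤ Submodule.span F (Set.range ![(1 : E), s]) from
    ⟨Module.Basis.mk hli hsp, by rw [Module.Basis.mk_apply]; rfl,
      by rw [Module.Basis.mk_apply]; rfl⟩
  intro x _
  obtain ⟨a, b, rfl⟩ := hgen x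
  have : algebraMap F E a + algebraMap F E b * s = a • ![(1 : E), s] 0 + b • ![(1 : E), s] 1 := by
    simp [Algebra.smul_def]
  rw [this]
  exact add_mem (Submodule.smul_mem _ _ (Submodule.subset_span ⟨0, rfl⟩))
    (Submodule.smul_mem _ _ (Submodule.subset_span ⟨1, rfl⟩))

theorem quad_matrix {F E : Type*} [Field F] [Field E] [Algebra F E] (d : F)
    (s : E) (hs : s ^ 2 = algebraMap F E d)
    (B : Module.Basis (Fin 2) F E) (h0 : B 0 = 1) (h1 : B 1 = s) (a b : F) :
    Algebra.leftMulMatrix B (algebraMap F E a + algebraMap F E b * s) = !![a, b * d; b, a] := by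
  have e0 : (algebraMap F E a + algebraMap F E b * s) * B 0 = a • B 0 + b • B 1 := by
    simp [h0, h1, Algebra.smul_def]
  have e1 : (algebraMap F E a + algebraMap F E b * s) * B 1 = (b * d) • B 0 + a • B 1 := by
    simp only [h0, h1, Algebra.smul_def, map_mul, ← hs]
    ring
  ext i j
  rw [Algebra.leftMulMatrix_eq_repr_mul]
  fin_cases j
  · change B.repr (_ * B 0) i = _
    rw [e0]
    fin_cases i <;> simp
  · change B.repr (_ * B 1) i = _
    rw [e1]
    fin_cases i <;> simp

theorem quad_norm_trace {F E : Type*} [Field F] [Field E] [Algebra F E] (d : F)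
    (hd : ¬ ∃ a : F, a ^ 2 = d) (s : E) (hs : s ^ 2 = algebraMap F E d)
    (hgen : ∀ x : E, ∃ a b : F, x = algebraMap F E a + algebraMap F E b * s) (a b : F) :
    Algebra.norm F (algebraMap F E a + algebraMap F E b * s) = a ^ 2 - d * b ^ 2 ∧
    Algebra.trace F E (algebraMap F E a + algebraMap F E b * s) = 2 * a := by
  obtain ⟨B, h0, h1⟩ := quad_basis d hd s hs hgen
  rw [Algebra.norm_eq_matrix_det B, Algebra.trace_eq_matrix_trace B,
    quad_matrix d s hs B h0 h1, Matrix.det_fin_two_of, Matrix.trace_fin_two_of]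
  constructor <;> ring

end helpers

/-- for `E = F(√u)` and `K = E(√ϖ)` with `u, ϖ, uϖ` non-squares in `F`
(char F ≠ 2), the quadratic form `q′(k) = ½·tr_{E/F}(N_{K/E}(k))` on the
4-dimensional `F`-vector space `K` is equivalent to `⟨1, u, −ϖ, −uϖ⟩`; in
particular its Gram determinant with respect to any `F`-basis is a nonzero
square, i.e. `q′` has trivial discriminant. -/
theorem stmt6 {F E K : Type*} [Field F] [Field E] [Field K]
    [Algebra F E] [Algebra E K] [Algebra F K] [IsScalarTower F E K]
    [FiniteDimensional F E] [FiniteDimensional E K]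
    (hchar : (2 : F) ≠ 0)
    (u ϖ : F)
    (hu : ¬ ∃ a : F, a ^ 2 = u) (hϖ : ¬ ∃ a : F, a ^ 2 = ϖ)
    (huϖ : ¬ ∃ a : F, a ^ 2 = u * ϖ)
    (sqrtu : E) (hsqrtu : sqrtu ^ 2 = algebraMap F E u)
    (hEgen : ∀ x : E, ∃ a b : F, x = algebraMap F E a + algebraMap F E b * sqrtu)
    (sqrtϖ : K) (hsqrtϖ : sqrtϖ ^ 2 = algebraMap F K ϖ)
    (hKgen : ∀ x : K, ∃ a b : E, x = algebraMap E K a + algebraMap E K b * sqrtϖ)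
    (q : K → F)
    (hq : ∀ k : K, q k = 1 / 2 * Algebra.trace F E (Algebra.norm E k)) :
    (∃ ℓ : (Fin 4 → F) ≃ₗ[F] K, ∀ v : Fin 4 → F,
        q (ℓ v) = 1 * v 0 ^ 2 + u * v 1 ^ 2 + (-ϖ) * v 2 ^ 2 + (-(u * ϖ)) * v 3 ^ 2) ∧
    (∀ b : Module.Basis (Fin 4) F K, ∃ c : F, c ≠ 0 ∧
        (Matrix.of fun i j : Fin 4 => (q (b i + b j) - q (b i) - q (b j)) / 2).det
          = c ^ 2) := by
  have hinj := (algebraMap F E).injective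
  have hu0 : u ≠ 0 := fun h => hu ⟨0, by simp [h]⟩
  have hϖ0 : ϖ ≠ 0 := fun h => hϖ ⟨0, by simp [h]⟩
  have hE : ¬ ∃ a : E, a ^ 2 = algebraMap F E ϖ := by
    rintro ⟨x, hx⟩
    obtain ⟨a, b, rfl⟩ := hEgen x
    have h := quad_indep u hu sqrtu hsqrtu (a ^ 2 + u * b ^ 2 - ϖ) (2 * a * b) (by
      simp only [map_sub, map_add, map_mul, map_pow, ← hx, ← hsqrtu, map_ofNat]
      ring)
    obtain ⟨h1, h2⟩ := h
    have h3 : a = 0 ∨ b = 0 := by simpa [hchar] using h2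
    rcases h3 with rfl | rfl
    · exact huϖ ⟨u * b, by linear_combination u * h1⟩
    · exact hϖ ⟨a, by linear_combination h1⟩
  have hsK : sqrtϖ ^ 2 = algebraMap E K (algebraMap F E ϖ) := by
    rw [hsqrtϖ, IsScalarTower.algebraMap_apply F E K]
  obtain ⟨B, hB0, hB1⟩ := quad_basis u hu sqrtu hsqrtu hEgen
  obtain ⟨C, hC0, hC1⟩ := quad_basis (algebraMap F E ϖ) hE sqrtϖ hsK hKgen
  have key : ∃ ℓ : (Fin 4 → F) ≃ₗ[F] K, ∀ v : Fin 4 → F,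
      q (ℓ v) = 1 * v 0 ^ 2 + u * v 1 ^ 2 + (-ϖ) * v 2 ^ 2 + (-(u * ϖ)) * v 3 ^ 2 := by
    let f : (Fin 4 → F) →ₗ[F] K := Fintype.linearCombination F
      ![1, algebraMap E K sqrtu, sqrtϖ, algebraMap E K sqrtu * sqrtϖ]
    have hf : ∀ v, f v = algebraMap E K (algebraMap F E (v 0) + algebraMap F E (v 1) * sqrtu)
        + algebraMap E K (algebraMap F E (v 2) + algebraMap F E (v 3) * sqrtu) * sqrtϖ := by
      intro v
      simp only [f, Fintype.linearCombination_apply, Fin.sum_univ_four, Algebra.smul_def,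
        IsScalarTower.algebraMap_apply F E K, map_add, map_mul]
      simp
      ring
    have hbij : Function.Bijective f := by
      constructor
      · rw [injective_iff_map_eq_zero]
        intro v hv
        rw [hf] at hv
        obtain ⟨h1, h2⟩ := quad_indep _ hE sqrtϖ hsK _ _ hv
        obtain ⟨h3, h4⟩ := quad_indep _ hu sqrtu hsqrtu _ _ h1
        obtain ⟨h5, h6⟩ := quad_indep _ hu sqrtu hsqrtu _ _ h2
        ext i
        fin_cases i <;> assumption
      · intro x
        obtain ⟨a, b, rfl⟩ := hKgen x
        obtain ⟨a1, a2, rfl⟩ := hEgen a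
        obtain ⟨b1, b2, rfl⟩ := hEgen b
        exact ⟨![a1, a2, b1, b2], by rw [hf]; simp⟩
    refine ⟨LinearEquiv.ofBijective f hbij, fun v => ?_⟩
    rw [LinearEquiv.ofBijective_apply, hf, hq,
      (quad_norm_trace _ hE sqrtϖ hsK hKgen _ _).1]
    have : (algebraMap F E (v 0) + algebraMap F E (v 1) * sqrtu) ^ 2
        - algebraMap F E ϖ * (algebraMap F E (v 2) + algebraMap F E (v 3) * sqrtu) ^ 2
        = algebraMap F E (v 0 ^ 2 + u * v 1 ^ 2 - ϖ * (v 2 ^ 2 + u * v 3 ^ 2))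
          + algebraMap F E (2 * v 0 * v 1 - ϖ * (2 * v 2 * v 3)) * sqrtu := by
      simp only [map_sub, map_add, map_mul, map_pow, ← hsqrtu, map_ofNat]
      ring
    rw [this, (quad_norm_trace _ hu sqrtu hsqrtu hEgen _ _).2]
    field_simp
    ring
  refine ⟨key, fun b => ?_⟩
  obtain ⟨ℓ, hℓ⟩ := key
  let D := Module.Basis.ofEquivFun ℓ.symm
  let P := D.toMatrix b
  have hP : ∀ i j, P i j = ℓ.symm (b j) i := fun i j => by
    simp [P, D, Module.Basis.toMatrix_apply]
  have hdet : P.det ≠ 0 := by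
    have h : P * b.toMatrix D = 1 := D.toMatrix_mul_toMatrix_flip b
    intro h0
    have := congrArg Matrix.det h
    rw [Matrix.det_mul, h0] at this
    simp at this
  have hqb : ∀ x : K, q x = 1 * ℓ.symm x 0 ^ 2 + u * ℓ.symm x 1 ^ 2 + (-ϖ) * ℓ.symm x 2 ^ 2
      + (-(u * ϖ)) * ℓ.symm x 3 ^ 2 := fun x => by
    rw [← hℓ, LinearEquiv.apply_symm_apply]
  have hG : (Matrix.of fun i j : Fin 4 => (q (b i + b j) - q (b i) - q (b j)) / 2)
      = P.transpose * Matrix.diagonal ![1, u, -ϖ, -(u * ϖ)] * P := by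
    ext i j
    rw [Matrix.mul_apply]
    simp only [Matrix.mul_diagonal, Matrix.transpose_apply, Fin.sum_univ_four, hP, hqb,
      Matrix.of_apply, map_add, Pi.add_apply]
    simp
    field_simp
    ring
  refine ⟨P.det * (u * ϖ), mul_ne_zero hdet (mul_ne_zero hu0 hϖ0), ?_⟩
  rw [hG, Matrix.det_mul, Matrix.det_mul, Matrix.det_transpose, Matrix.det_diagonal,
    Fin.prod_univ_four]
  simp
  ring
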